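/- Fix n ≥ 3. Let (X_1, ..., X_n) be a stationary two-state Markov chain on {0,1} with transition probabilities P(0→1) = 1/(n+1), P(0→0) = n/(n+1), P(1→1) = 2/(n+1), P(1→0) = (n−1)/(n+1), so that each X_i has the stationary Bernoulli(1/n) distribution. Then the distribution P_{S_n} of S_n = X_1 + ... + X_n satisfies D(P_{S_n} ‖ Po(1)) ≤ 3 (log n)/n + 1/n. -/

import Mathlib

open MeasureTheory ProbabilityTheory Real Filter

/-- The distribution (probability mass function) of a random variable `X`,
as a real-valued function: `distOf μ X a = μ(X = a)`. -/
noncomputable def distOf {Ω α : Type*} [MeasurableSpace Ω] (μ : Measure Ω) (X : Ω → α) (a : α) : ℝ :=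
  (μ {ω | X ω = a}).toReal

/-- Relative entropy `D(P‖Q) = ∑ₓ P(x) log (P(x)/Q(x))` (natural logarithm). -/
noncomputable def relEnt {α : Type*} (P Q : α → ℝ) : ℝ :=
  ∑' x, P x * Real.log (P x / Q x)

/-- Shannon entropy `H(P) = -∑ₓ P(x) log P(x)` (natural logarithm). -/
noncomputable def entH {α : Type*} (P : α → ℝ) : ℝ :=
  -∑' x, P x * Real.log (P x)

/-- The Poisson(l) probability mass function on ℕ. -/
noncomputable def poissonPMF (l : ℝ) (k : ℕ) : ℝ :=
  Real.exp (-l) * l ^ k / (Nat.factorial k)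

/-- The scaled score function `ρ_X(x) = (x+1)P(x+1)/(λ P(x)) - 1`. -/
noncomputable def scaledScore (P : ℕ → ℝ) (l : ℝ) (x : ℕ) : ℝ :=
  ((x + 1 : ℕ) : ℝ) * P (x + 1) / (l * P x) - 1

/-- The scaled Fisher information `K(X) = λ E[ρ_X(X)²]`. -/
noncomputable def scaledFisher (P : ℕ → ℝ) (l : ℝ) : ℝ :=
  l * ∑' x, P x * (scaledScore P l x) ^ 2

/-- Total variation distance `‖P - Q‖_TV = ∑ₓ |P(x) - Q(x)|`. -/
noncomputable def tvDist {α : Type*} (P Q : α → ℝ) : ℝ :=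
  ∑' x, |P x - Q x|

/-- The `0`-`1` sequence of a finite set of indices. -/
def indSeq (A : Finset ℕ) (i : ℕ) : ℕ := if i ∈ A then 1 else 0

lemma indSeq_le_one (A : Finset ℕ) (i : ℕ) : indSeq A i ≤ 1 := by
  unfold indSeq; split_ifs <;> simp

lemma indSeq_insert_self (A : Finset ℕ) (i : ℕ) : indSeq (insert i A) i = 1 := by
  simp [indSeq]

lemma indSeq_insert_of_ne (A : Finset ℕ) {i j : ℕ} (h : j ≠ i) :
    indSeq (insert i A) j = indSeq A j := by
  simp [indSeq, h]

/-- Transfer-matrix bound: if `v` is a supersolution for `M` with rate `ρ`, the weighted sum over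
all binary paths of length `m + 1` is at most `ρ ^ m` times the initial weight. -/
lemma sum_paths_le (w : ℕ → ℝ) (M : ℕ → ℕ → ℝ) (v : ℕ → ℝ) (ρ : ℝ) (hρ : 0 ≤ ρ)
    (hw : ∀ a, 0 ≤ w a) (hM : ∀ a b, 0 ≤ M a b)
    (hv : ∀ a ≤ 1, M a 0 * v 0 + M a 1 * v 1 ≤ ρ * v a) (m : ℕ) :
    ∑ A ∈ (Finset.range (m + 1)).powerset,
      w (indSeq A 0) * (∏ i ∈ Finset.range m, M (indSeq A i) (indSeq A (i + 1))) *
        v (indSeq A m) ≤ ρ ^ m * (w 0 * v 0 + w 1 * v 1) := by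
  induction m with
  | zero =>
    rw [Finset.range_add_one, Finset.sum_powerset_insert (by simp)]
    simp [indSeq]
  | succ m ih =>
    rw [Finset.range_add_one, Finset.sum_powerset_insert (by simp), ← Finset.sum_add_distrib]
    have step : ∀ A ∈ (Finset.range (m + 1)).powerset,
        w (indSeq A 0) * (∏ i ∈ Finset.range (m + 1), M (indSeq A i) (indSeq A (i + 1))) *
            v (indSeq A (m + 1)) +
          w (indSeq (insert (m + 1) A) 0) * (∏ i ∈ Finset.range (m + 1),
            M (indSeq (insert (m + 1) A) i) (indSeq (insert (m + 1) A) (i + 1))) *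
            v (indSeq (insert (m + 1) A) (m + 1)) ≤
        ρ * (w (indSeq A 0) * (∏ i ∈ Finset.range m, M (indSeq A i) (indSeq A (i + 1))) *
          v (indSeq A m)) := by
      intro A hA
      have hlast : indSeq A (m + 1) = 0 := by
        have : m + 1 ∉ A := fun h => by simpa using Finset.mem_powerset.1 hA h
        simp [indSeq, this]
      have hprod : ∏ i ∈ Finset.range m,
          M (indSeq (insert (m + 1) A) i) (indSeq (insert (m + 1) A) (i + 1)) =
          ∏ i ∈ Finset.range m, M (indSeq A i) (indSeq A (i + 1)) := by
        refine Finset.prod_congr rfl fun i hi => ?_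
        have := Finset.mem_range.1 hi
        rw [indSeq_insert_of_ne _ (by omega), indSeq_insert_of_ne _ (by omega)]
      rw [Finset.prod_range_succ, Finset.prod_range_succ, hprod, indSeq_insert_self,
        indSeq_insert_of_ne _ (by omega), indSeq_insert_of_ne _ (by omega), hlast]
      have hnn : 0 ≤ w (indSeq A 0) * ∏ i ∈ Finset.range m, M (indSeq A i) (indSeq A (i + 1)) :=
        mul_nonneg (hw _) (Finset.prod_nonneg fun i _ => hM _ _)
      have := mul_le_mul_of_nonneg_left (hv _ (indSeq_le_one A m)) hnn
      linarith
    calc _ ≤ _ := Finset.sum_le_sum step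
      _ = ρ * _ := (Finset.mul_sum _ _ _).symm
      _ ≤ ρ * _ := mul_le_mul_of_nonneg_left ih hρ
      _ = _ := by ring

lemma sum_indSeq_of_subset {A : Finset ℕ} {n : ℕ} (hA : A ⊆ Finset.range n) :
    ∑ i ∈ Finset.range n, indSeq A i = A.card := by
  simp only [indSeq]
  rw [Finset.sum_ite_mem, Finset.inter_eq_right.2 hA]
  simp

/-- The law of a sum of `0`-`1` variables as a sum over configurations. -/
lemma distOf_sum_eq {Ω : Type*} [MeasurableSpace Ω] (μ : Measure Ω) [IsProbabilityMeasure μ]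
    (n : ℕ) (X : ℕ → Ω → ℕ) (hmeas : ∀ i, Measurable (X i)) (hbin : ∀ i ω, X i ω ≤ 1) (k : ℕ) :
    distOf μ (fun ω => ∑ i ∈ Finset.range n, X i ω) k =
      ∑ A ∈ Finset.powersetCard k (Finset.range n),
        (μ {ω | ∀ i, i < n → X i ω = indSeq A i}).toReal := by
  have hset : {ω | ∑ i ∈ Finset.range n, X i ω = k} =
      ⋃ A ∈ Finset.powersetCard k (Finset.range n), {ω | ∀ i, i < n → X i ω = indSeq A i} := by
    ext ω
    simp only [Set.mem_ofPred_eq, Set.mem_iUnion, Finset.mem_powersetCard, exists_prop]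
    constructor
    · intro h
      have hX : ∀ i, i < n →
          X i ω = indSeq ((Finset.range n).filter fun i => X i ω = 1) i := by
        intro i hi
        have := hbin i ω
        simp only [indSeq, Finset.mem_filter, Finset.mem_range, hi, true_and]
        split_ifs <;> omega
      refine ⟨_, ⟨Finset.filter_subset _ _, ?_⟩, hX⟩
      rw [← sum_indSeq_of_subset (Finset.filter_subset _ _), ← h]
      exact Finset.sum_congr rfl fun i hi => (hX i (Finset.mem_range.1 hi)).symm
    · rintro ⟨A, ⟨hA, hk⟩, h⟩
      rw [← hk, ← sum_indSeq_of_subset hA]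
      exact Finset.sum_congr rfl fun i hi => h i (Finset.mem_range.1 hi)
  unfold distOf
  rw [hset]
  refine measureReal_biUnion_finset ?_ ?_
  · intro A hA B hB hAB
    refine Set.disjoint_left.2 fun ω h1 h2 => hAB ?_
    have hA' := (Finset.mem_powersetCard.1 hA).1
    have hB' := (Finset.mem_powersetCard.1 hB).1
    ext i
    by_cases hi : i < n
    · have : indSeq A i = indSeq B i := (h1 i hi).symm.trans (h2 i hi)
      simp only [indSeq] at this
      split_ifs at this <;> simp_all
    · have h3 : i ∉ A := fun h => hi (Finset.mem_range.1 (hA' h))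
      have h4 : i ∉ B := fun h => hi (Finset.mem_range.1 (hB' h))
      simp [h3, h4]
  · intro A _
    simp only [Set.ofPred_forall]
    exact MeasurableSet.iInter fun i => MeasurableSet.iInter fun _ =>
      hmeas i (measurableSet_singleton _)

/-- The law of a bounded `ℕ`-valued variable sums to one. -/
lemma sum_distOf_eq_one {Ω : Type*} [MeasurableSpace Ω] (μ : Measure Ω) [IsProbabilityMeasure μ]
    (n : ℕ) (S : Ω → ℕ) (hS : Measurable S) (hn : ∀ ω, S ω ≤ n) :
    ∑ k ∈ Finset.range (n + 1), distOf μ S k = 1 := by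
  have hU : (⋃ k ∈ Finset.range (n + 1), {ω | S ω = k}) = Set.univ := by
    ext ω
    simpa [Nat.lt_succ_iff] using hn ω
  have h := measureReal_biUnion_finset (μ := μ) (s := Finset.range (n + 1))
    (f := fun k => {ω | S ω = k})
    (fun a _ b _ hab => Set.disjoint_left.2 fun ω h1 h2 => hab (h1.symm.trans h2))
    (fun k _ => hS (measurableSet_singleton k))
  rw [hU, probReal_univ] at h
  exact h.symm

/-- Tangent-line form of the bound of relative entropy by the chi-square divergence. -/
lemma mul_log_div_le {p q t : ℝ} (hp : 0 ≤ p) (hq : 0 < q) :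
    p * Real.log (p / q) ≤ p * (t - 1) + Real.exp (-t) * (p ^ 2 / q) := by
  rcases hp.eq_or_lt with rfl | hp
  · simp
  have h1 : 0 < p / q := div_pos hp hq
  have h := Real.log_le_sub_one_of_pos (mul_pos (Real.exp_pos (-t)) h1)
  rw [Real.log_mul (Real.exp_pos _).ne' h1.ne', Real.log_exp] at h
  have := mul_le_mul_of_nonneg_left (show Real.log (p / q) ≤ t - 1 + Real.exp (-t) * (p / q) by
    linarith) hp.le
  calc _ ≤ _ := this
    _ = _ := by ring

/-- The Poisson(1) mass at `k` dominates the image of the weight `e⁻¹ n ^ (-|A|)`. -/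
lemma sum_powersetCard_weight_le_poissonPMF (n k : ℕ) (hn : 0 < n) :
    ∑ A ∈ Finset.powersetCard k (Finset.range n), Real.exp (-1) / (n : ℝ) ^ A.card ≤
      _root_.poissonPMF 1 k := by
  have hn' : (0 : ℝ) < (n : ℝ) ^ k := by positivity
  rw [Finset.sum_congr rfl (g := fun _ => Real.exp (-1) / (n : ℝ) ^ k)
    fun A hA => by rw [(Finset.mem_powersetCard.1 hA).2]]
  rw [Finset.sum_const, Finset.card_powersetCard, Finset.card_range, nsmul_eq_mul, _root_.poissonPMF]
  have h : ((n.choose k : ℕ) : ℝ) ≤ (n : ℝ) ^ k / k.factorial := Nat.choose_le_pow_div k n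
  have := mul_le_mul_of_nonneg_right h (div_pos (Real.exp_pos (-1)) hn').le
  calc _ ≤ _ := this
    _ = _ := by field_simp; simp

/-- If a law on configurations has `∑ p² / q ≤ eᵗ` against the weight `e⁻¹ n ^ (-|A|)`, its
cardinality is within relative entropy `t` of Poisson(1). -/
lemma relEnt_poisson_le_of_sum_sq {Ω : Type*} [MeasurableSpace Ω] (μ : Measure Ω)
    [IsProbabilityMeasure μ] (n : ℕ) (hn : 0 < n) (X : ℕ → Ω → ℕ)
    (hmeas : ∀ i, Measurable (X i)) (hbin : ∀ i ω, X i ω ≤ 1) (t : ℝ)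
    (h : ∑ A ∈ (Finset.range n).powerset,
      (μ {ω | ∀ i, i < n → X i ω = indSeq A i}).toReal ^ 2 * (Real.exp 1 * (n : ℝ) ^ A.card) ≤
        Real.exp t) :
    relEnt (distOf μ (fun ω => ∑ i ∈ Finset.range n, X i ω)) (_root_.poissonPMF 1) ≤ t := by
  set P := distOf μ (fun ω => ∑ i ∈ Finset.range n, X i ω)
  set p : Finset ℕ → ℝ := fun A => (μ {ω | ∀ i, i < n → X i ω = indSeq A i}).toReal with hp
  have hPk : ∀ k, P k = ∑ A ∈ Finset.powersetCard k (Finset.range n), p A :=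
    distOf_sum_eq μ n X hmeas hbin
  have hP0 : ∀ k, 0 ≤ P k := fun k => ENNReal.toReal_nonneg
  have hq : ∀ k, 0 < _root_.poissonPMF 1 k := fun k => by unfold _root_.poissonPMF; positivity
  have hn0 : (0 : ℝ) < n := by exact_mod_cast hn
  have hPsum : ∑ k ∈ Finset.range (n + 1), P k = 1 := by
    refine sum_distOf_eq_one μ n _ (Finset.measurable_fun_sum _ fun i _ => hmeas i) fun ω => ?_
    simpa using Finset.sum_le_sum fun i (_ : i ∈ Finset.range n) => hbin i ω
  have hsq : ∀ k, P k ^ 2 / _root_.poissonPMF 1 k ≤ ∑ A ∈ Finset.powersetCard k (Finset.range n),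
      p A ^ 2 * (Real.exp 1 * (n : ℝ) ^ A.card) := by
    intro k
    rw [div_le_iff₀ (hq k), hPk]
    refine (Finset.sum_sq_le_sum_mul_sum_of_sq_le_mul _ (r := p)
      (f := fun A => p A ^ 2 * (Real.exp 1 * (n : ℝ) ^ A.card))
      (g := fun A => Real.exp (-1) / (n : ℝ) ^ A.card)
      (fun A _ => by positivity) (fun A _ => by positivity) fun A _ => ?_).trans ?_
    · refine le_of_eq ?_
      rw [Real.exp_neg]
      field_simp
    · exact mul_le_mul_of_nonneg_left (sum_powersetCard_weight_le_poissonPMF n k hn)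
        (Finset.sum_nonneg fun A _ => by positivity)
  have hfin : relEnt P (_root_.poissonPMF 1) =
      ∑ k ∈ Finset.range (n + 1), P k * Real.log (P k / _root_.poissonPMF 1 k) := by
    refine tsum_eq_sum fun k hk => ?_
    have hk' : n < k := by simpa [Nat.lt_succ_iff] using hk
    rw [hPk, Finset.powersetCard_eq_empty.2 (by simpa using hk')]
    simp
  rw [hfin]
  calc ∑ k ∈ Finset.range (n + 1), P k * Real.log (P k / _root_.poissonPMF 1 k)
      ≤ ∑ k ∈ Finset.range (n + 1), (P k * (t - 1) + Real.exp (-t) *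
          ∑ A ∈ Finset.powersetCard k (Finset.range n),
            p A ^ 2 * (Real.exp 1 * (n : ℝ) ^ A.card)) := by
        refine Finset.sum_le_sum fun k _ => (mul_log_div_le (t := t) (hP0 k) (hq k)).trans ?_
        gcongr
        exact hsq k
    _ = t - 1 + Real.exp (-t) * ∑ A ∈ (Finset.range n).powerset,
          p A ^ 2 * (Real.exp 1 * (n : ℝ) ^ A.card) := by
        rw [Finset.sum_add_distrib, ← Finset.sum_mul, hPsum, ← Finset.mul_sum,
          Finset.sum_powerset, Finset.card_range, one_mul]
    _ ≤ t - 1 + Real.exp (-t) * Real.exp t := by gcongr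
    _ = t := by rw [← Real.exp_add]; simp

/-- The transition probabilities of the chain on `{0, 1}`. -/
noncomputable def chainKernel (n : ℕ) (a b : ℕ) : ℝ :=
  if a = 0 then (if b = 0 then (n : ℝ) / (n + 1) else 1 / (n + 1))
  else (if b = 0 then ((n : ℝ) - 1) / (n + 1) else 2 / (n + 1))

/-- The Bernoulli(`1 / n`) initial law. -/
noncomputable def chainInit (n : ℕ) (a : ℕ) : ℝ := if a = 1 then (1 : ℝ) / n else 1 - 1 / n

lemma sum_sq_chain_le (n : ℕ) (hn : 3 ≤ n) :
    ∑ A ∈ (Finset.range n).powerset,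
      (chainInit n (indSeq A 0) * ∏ i ∈ Finset.range (n - 1),
        chainKernel n (indSeq A i) (indSeq A (i + 1))) ^ 2 * (Real.exp 1 * (n : ℝ) ^ A.card) ≤
      Real.exp (4 / n) := by
  obtain ⟨m, rfl⟩ : ∃ m, n = m + 1 := ⟨n - 1, by omega⟩
  simp only [Nat.add_sub_cancel]
  set x : ℝ := ((m + 1 : ℕ) : ℝ) with hx
  have hx3 : (3 : ℝ) ≤ x := by rw [hx]; exact_mod_cast hn
  have hmx : (m : ℝ) = x - 1 := by rw [hx]; push_cast; ring
  set ρ : ℝ := 1 - (x - 2) / (x + 1) ^ 2 with hρ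
  have hρ' : ρ = (x ^ 2 + x + 3) / (x + 1) ^ 2 := by rw [hρ]; field_simp; ring
  have hρ0 : 0 ≤ ρ := by rw [hρ']; positivity
  set w : ℕ → ℝ := fun a => chainInit (m + 1) a ^ 2 * x ^ a with hw
  set M : ℕ → ℕ → ℝ := fun a b => chainKernel (m + 1) a b ^ 2 * x ^ b with hM
  set v : ℕ → ℝ := fun a => if a = 0 then 1 else 1 + 3 / x with hv
  have hw0 : ∀ a, 0 ≤ w a := fun a => by positivity
  have hM0 : ∀ a b, 0 ≤ M a b := fun a b => by positivity
  have hv1 : ∀ a, 1 ≤ v a := fun a => by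
    have : 0 ≤ 3 / x := by positivity
    simp only [hv]; split_ifs <;> linarith
  have hsup : ∀ a ≤ 1, M a 0 * v 0 + M a 1 * v 1 ≤ ρ * v a := by
    intro a ha
    interval_cases a
    · simp only [hM, hv, chainKernel, hρ', ← hx]
      simp
      apply le_of_eq
      field_simp
      ring
    · simp only [hM, hv, chainKernel, hρ', ← hx]
      simp
      rw [← sub_nonneg]
      have : (x ^ 2 + x + 3) / (x + 1) ^ 2 * (1 + 3 / x) -
          (((x - 1) / (x + 1)) ^ 2 + (2 / (x + 1)) ^ 2 * x * (1 + 3 / x)) =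
          (2 * x ^ 2 - 7 * x + 9) / ((x + 1) ^ 2 * x) := by
        field_simp
        ring
      rw [this]
      have : 0 ≤ 2 * x ^ 2 - 7 * x + 9 := by nlinarith
      positivity
  have hpaths := sum_paths_le w M v ρ hρ0 hw0 hM0 hsup m
  have hterm : ∀ A ∈ (Finset.range (m + 1)).powerset,
      (chainInit (m + 1) (indSeq A 0) * ∏ i ∈ Finset.range m,
        chainKernel (m + 1) (indSeq A i) (indSeq A (i + 1))) ^ 2 * (Real.exp 1 * x ^ A.card) ≤
      Real.exp 1 * (w (indSeq A 0) *
        (∏ i ∈ Finset.range m, M (indSeq A i) (indSeq A (i + 1))) * v (indSeq A m)) := by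
    intro A hA
    have hcard : x ^ A.card = (∏ i ∈ Finset.range m, x ^ indSeq A (i + 1)) * x ^ indSeq A 0 := by
      rw [← Finset.prod_range_succ' (fun i => x ^ indSeq A i), Finset.prod_pow_eq_pow_sum,
        sum_indSeq_of_subset (Finset.mem_powerset.1 hA)]
    have heq : (chainInit (m + 1) (indSeq A 0) * ∏ i ∈ Finset.range m,
        chainKernel (m + 1) (indSeq A i) (indSeq A (i + 1))) ^ 2 * (Real.exp 1 * x ^ A.card) =
        Real.exp 1 * (w (indSeq A 0) *
          ∏ i ∈ Finset.range m, M (indSeq A i) (indSeq A (i + 1))) := by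
      simp only [hw, hM]
      rw [Finset.prod_mul_distrib, Finset.prod_pow, hcard]
      ring
    rw [heq]
    refine mul_le_mul_of_nonneg_left ?_ (Real.exp_pos 1).le
    exact le_mul_of_one_le_right
      (mul_nonneg (hw0 _) (Finset.prod_nonneg fun i _ => hM0 _ _)) (hv1 _)
  have hρexp : ρ ^ m ≤ Real.exp (-((x - 1) * (x - 2) / (x + 1) ^ 2)) := by
    calc ρ ^ m ≤ Real.exp (-((x - 2) / (x + 1) ^ 2)) ^ m := by
          refine pow_le_pow_left₀ hρ0 ?_ m
          have := Real.add_one_le_exp (-((x - 2) / (x + 1) ^ 2))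
          linarith
      _ = _ := by rw [← Real.exp_nat_mul, hmx]; congr 1; ring
  have hinit : w 0 * v 0 + w 1 * v 1 ≤ Real.exp (-1 / x + 4 / x ^ 2) := by
    have : w 0 * v 0 + w 1 * v 1 = -1 / x + 4 / x ^ 2 + 1 := by
      simp only [hw, hv, chainInit, ← hx]
      simp
      field_simp
      ring
    rw [this]
    exact Real.add_one_le_exp _
  have hnum : 1 + (-((x - 1) * (x - 2) / (x + 1) ^ 2) + (-1 / x + 4 / x ^ 2)) ≤ 4 / x := by
    rw [← sub_nonneg]
    have : 4 / x - (1 + (-((x - 1) * (x - 2) / (x + 1) ^ 2) + (-1 / x + 4 / x ^ 2))) =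
        (7 * x ^ 2 - 3 * x - 4) / (x ^ 2 * (x + 1) ^ 2) := by
      field_simp
      ring
    rw [this]
    have : 0 ≤ 7 * x ^ 2 - 3 * x - 4 := by nlinarith
    positivity
  calc _ ≤ _ := Finset.sum_le_sum hterm
    _ = Real.exp 1 * _ := (Finset.mul_sum _ _ _).symm
    _ ≤ Real.exp 1 * (ρ ^ m * (w 0 * v 0 + w 1 * v 1)) :=
        mul_le_mul_of_nonneg_left hpaths (Real.exp_pos 1).le
    _ ≤ Real.exp 1 * (Real.exp (-((x - 1) * (x - 2) / (x + 1) ^ 2)) *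
          Real.exp (-1 / x + 4 / x ^ 2)) := by
        have : 0 ≤ ρ ^ m := pow_nonneg hρ0 m
        gcongr
    _ = Real.exp (1 + (-((x - 1) * (x - 2) / (x + 1) ^ 2) + (-1 / x + 4 / x ^ 2))) := by
        rw [← Real.exp_add, ← Real.exp_add]
    _ ≤ _ := Real.exp_le_exp.2 hnum

/-- The Markov chain example: if `(X₀,…,X_{n-1})` is a stationary two-state Markov chain
on `{0,1}` with transition probabilities `K(0,1) = 1/(n+1)`, `K(0,0) = n/(n+1)`,
`K(1,1) = 2/(n+1)`, `K(1,0) = (n-1)/(n+1)` and stationary Bernoulli(1/n) marginals, then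
`D(P_{S_n} ‖ Po(1)) ≤ 3 (log n)/n + 1/n` for `n ≥ 3`. -/
theorem poisson_approx_markov_chain {Ω : Type*} [MeasurableSpace Ω]
    (μ : Measure Ω) [IsProbabilityMeasure μ]
    (n : ℕ) (hn : 3 ≤ n)
    (X : ℕ → Ω → ℕ)
    (hmeas : ∀ i, Measurable (X i))
    (hbin : ∀ i ω, X i ω ≤ 1)
    (hjoint : ∀ x : ℕ → ℕ, (∀ i, i < n → x i ≤ 1) →
      (μ {ω | ∀ i, i < n → X i ω = x i}).toReal =
        (if x 0 = 1 then (1 : ℝ) / n else 1 - 1 / n) *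
          ∏ i ∈ Finset.range (n - 1),
            (if x i = 0 then
              (if x (i + 1) = 0 then (n : ℝ) / (n + 1) else 1 / (n + 1))
            else
              (if x (i + 1) = 0 then ((n : ℝ) - 1) / (n + 1) else 2 / (n + 1)))) :
    relEnt (distOf μ (fun ω => ∑ i ∈ Finset.range n, X i ω)) (poissonPMF 1) ≤
      3 * Real.log n / n + 1 / n := by
  have hn0 : (0 : ℝ) < n := by exact_mod_cast (by omega : 0 < n)
  have hlog : 1 ≤ Real.log n := by
    rw [Real.le_log_iff_exp_le hn0]
    have h3 : (3 : ℝ) ≤ n := by exact_mod_cast hn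
    linarith [Real.exp_one_lt_d9]
  have hent : relEnt (distOf μ (fun ω => ∑ i ∈ Finset.range n, X i ω))
      (_root_.poissonPMF 1) ≤ 4 / n := by
    refine relEnt_poisson_le_of_sum_sq μ n (by omega) X hmeas hbin (4 / n) ?_
    refine le_of_eq_of_le (Finset.sum_congr rfl fun A _ => ?_) (sum_sq_chain_le n hn)
    rw [hjoint _ fun i _ => indSeq_le_one A i]
    rfl
  refine hent.trans ?_
  rw [← add_div]
  gcongr
  linarith
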